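/- Let a>0, k>0 and θ>0. For real z with 0 < z² < a² define C_g(z) = (a² − z²) / ( e·z²·( 2 + (3/2)·θ·z + 2·θ·z³/(a² − z²) )² ) (e = Euler's number), and define the symmetric 2×2 matrix Ã₃(z) with entries Ã₃(z)₁₁ = (1/e)·(a² + 3·z²)/(a² − z²) − 2·k·z, Ã₃(z)₁₂ = Ã₃(z)₂₁ = k − (1/e)·2·z/(a² − z²), and Ã₃(z)₂₂ = C_g(z) + (1/e)·1/(a² − z²). Then there exists ε₁ > 0 such that for every z∈ℝ with 0 < |z| ≤ 2·ε₁ the matrix Ã₃(z) is positive definite. -/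

import Mathlib

/-!
As `z → 0` with `z ≠ 0`, the entry `Ã₃₁₁` tends to `1/e > 0`, the off-diagonal entry tends to the
finite value `k`, and `Ã₃₂₂` tends to `+∞`, because `C_g(z)` is a positive quantity close to `a²`
divided by a positive quantity tending to `0`. Hence both `Ã₃₁₁` and the determinant
`Ã₃₁₁ Ã₃₂₂ - Ã₃₁₂²` are eventually positive, and Sylvester's criterion applies.
-/

/-- The coefficient `C_g(z)` from the boundary term estimate at `x = L`. -/
noncomputable def Cg (a θ z : ℝ) : ℝ :=
  (a ^ 2 - z ^ 2) /
    (Real.exp 1 * z ^ 2 *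
      (2 + (3 / 2) * θ * z + 2 * θ * z ^ 3 / (a ^ 2 - z ^ 2)) ^ 2)

/-- The matrix `Ã₃(z)` from the boundary term estimate at `x = L`. -/
noncomputable def Atilde3 (a k θ z : ℝ) : Matrix (Fin 2) (Fin 2) ℝ :=
  !![(1 / Real.exp 1) * (a ^ 2 + 3 * z ^ 2) / (a ^ 2 - z ^ 2) - 2 * k * z,
      k - (1 / Real.exp 1) * (2 * z) / (a ^ 2 - z ^ 2);
      k - (1 / Real.exp 1) * (2 * z) / (a ^ 2 - z ^ 2),
      Cg a θ z + (1 / Real.exp 1) * 1 / (a ^ 2 - z ^ 2)]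

open Filter Topology
open scoped Matrix

/-- Sylvester's criterion for real symmetric `2 × 2` matrices, by completing the square. -/
lemma posDef_two_of_pos_of_det_pos {p q r : ℝ} (hp : 0 < p) (hdet : 0 < p * r - q ^ 2) :
    (!![p, q; q, r] : Matrix (Fin 2) (Fin 2) ℝ).PosDef := by
  refine Matrix.PosDef.of_dotProduct_mulVec_pos ?_ fun x hx => ?_
  · ext i j
    fin_cases i <;> fin_cases j <;> simp
  have hform : star x ⬝ᵥ (!![p, q; q, r] *ᵥ x)
      = ((p * x 0 + q * x 1) ^ 2 + (p * r - q ^ 2) * x 1 ^ 2) / p := by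
    simp [Matrix.mulVec, dotProduct, Fin.sum_univ_two]
    field_simp
    ring
  rw [hform]
  refine div_pos ?_ hp
  by_cases h1 : x 1 = 0
  · have h0 : x 0 ≠ 0 := by
      intro h0
      apply hx
      ext i
      fin_cases i <;> simp [h0, h1]
    rw [h1]
    simp only [mul_zero, add_zero]
    positivity
  · positivity

lemma tendsto_Cg_atTop {a : ℝ} (ha : 0 < a) (θ : ℝ) :
    Tendsto (Cg a θ) (𝓝[≠] 0) atTop := by
  have hd : a ^ 2 - (0 : ℝ) ^ 2 ≠ 0 := by
    have : 0 < a ^ 2 := by positivity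
    simpa using this.ne'
  have hnum : Tendsto (fun z : ℝ => a ^ 2 - z ^ 2) (𝓝[≠] 0) (𝓝 (a ^ 2)) := by
    have h : ContinuousAt (fun z : ℝ => a ^ 2 - z ^ 2) 0 := by fun_prop
    simpa using h.tendsto.mono_left nhdsWithin_le_nhds
  have hs : ContinuousAt
      (fun z : ℝ => 2 + (3 / 2) * θ * z + 2 * θ * z ^ 3 / (a ^ 2 - z ^ 2)) 0 := by
    fun_prop (disch := exact hd)
  have hs0 : Tendsto (fun z : ℝ => 2 + (3 / 2) * θ * z + 2 * θ * z ^ 3 / (a ^ 2 - z ^ 2))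
      (𝓝[≠] 0) (𝓝 2) := by
    simpa using hs.tendsto.mono_left nhdsWithin_le_nhds
  have hz : Tendsto (fun z : ℝ => z) (𝓝[≠] 0) (𝓝 0) := tendsto_id.mono_left nhdsWithin_le_nhds
  have hden : Tendsto (fun z : ℝ => Real.exp 1 * z ^ 2 *
      (2 + (3 / 2) * θ * z + 2 * θ * z ^ 3 / (a ^ 2 - z ^ 2)) ^ 2) (𝓝[≠] 0) (𝓝[>] 0) := by
    refine tendsto_nhdsWithin_iff.2 ⟨?_, ?_⟩
    · simpa using ((hz.pow 2).const_mul (Real.exp 1)).mul (hs0.pow 2)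
    · filter_upwards [self_mem_nhdsWithin, hs0.eventually_const_lt (zero_lt_two)] with z hz0 hpos
      have : z ≠ 0 := hz0
      exact mul_pos (by positivity) (pow_pos hpos 2)
  exact hnum.pos_mul_atTop (by positivity) (tendsto_inv_nhdsGT_zero.comp hden)

/-- There exists `ε₁ > 0` such that for all `z` with `0 < |z| ≤ 2 ε₁`
the matrix `Ã₃(z)` is positive definite. -/
theorem Atilde3_posDef_near_zero
    (a k θ : ℝ) (ha : 0 < a) (hk : 0 < k) (hθ : 0 < θ) :
    ∃ ε₁ > (0 : ℝ), ∀ z : ℝ, 0 < |z| → |z| ≤ 2 * ε₁ → (Atilde3 a k θ z).PosDef := by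
  have ha2 : 0 < a ^ 2 := by positivity
  have hd : a ^ 2 - (0 : ℝ) ^ 2 ≠ 0 := by simpa using ha2.ne'
  have h11 : Tendsto (fun z : ℝ =>
      (1 / Real.exp 1) * (a ^ 2 + 3 * z ^ 2) / (a ^ 2 - z ^ 2) - 2 * k * z)
      (𝓝[≠] 0) (𝓝 (1 / Real.exp 1)) := by
    have h : ContinuousAt (fun z : ℝ =>
        (1 / Real.exp 1) * (a ^ 2 + 3 * z ^ 2) / (a ^ 2 - z ^ 2) - 2 * k * z) 0 := by
      fun_prop (disch := exact hd)
    simpa [ha.ne'] using h.tendsto.mono_left nhdsWithin_le_nhds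
  have h12 : Tendsto (fun z : ℝ => k - (1 / Real.exp 1) * (2 * z) / (a ^ 2 - z ^ 2))
      (𝓝[≠] 0) (𝓝 k) := by
    have h : ContinuousAt (fun z : ℝ =>
        k - (1 / Real.exp 1) * (2 * z) / (a ^ 2 - z ^ 2)) 0 := by
      fun_prop (disch := exact hd)
    simpa using h.tendsto.mono_left nhdsWithin_le_nhds
  have h22 : Tendsto (fun z : ℝ => Cg a θ z + (1 / Real.exp 1) * 1 / (a ^ 2 - z ^ 2))
      (𝓝[≠] 0) atTop := by
    have h : ContinuousAt (fun z : ℝ => (1 / Real.exp 1) * 1 / (a ^ 2 - z ^ 2)) 0 := by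
      fun_prop (disch := exact hd)
    exact (tendsto_Cg_atTop ha θ).atTop_add (h.tendsto.mono_left nhdsWithin_le_nhds)
  have he : 0 < 1 / Real.exp 1 := by positivity
  have hdet := (h11.pos_mul_atTop he h22).atTop_add (h12.pow 2).neg
  have hev : ∀ᶠ z in 𝓝[≠] (0 : ℝ), (Atilde3 a k θ z).PosDef := by
    filter_upwards [h11.eventually_const_lt he, hdet.eventually_gt_atTop 0] with z hp hq
    exact posDef_two_of_pos_of_det_pos hp (by rwa [sub_eq_add_neg])
  obtain ⟨δ, hδ, hball⟩ := Metric.eventually_nhds_iff.1 (eventually_nhdsWithin_iff.1 hev)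
  -- `2 * (δ / 4) < δ` leaves room for the non-strict bound `|z| ≤ 2 * ε₁`.
  refine ⟨δ / 4, by positivity, fun z hz0 hz => ?_⟩
  exact hball (by rw [Real.dist_eq, sub_zero]; linarith) (abs_pos.1 hz0)
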